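/- For 0 < β ≤ α < 1/2, the inequality (Φ⁻¹(β))² φ³(Φ⁻¹(α)) (2α-1)/(α²(1-α)²) + 2(1-2β) ln(β/(1-β)) Φ⁻¹(α) ≥ 0 holds, where Φ and φ are the standard normal CDF and PDF. -/

import Mathlib

open Real Set Filter Topology

noncomputable def phi (y : ℝ) : ℝ := (Real.sqrt (2 * Real.pi))⁻¹ * Real.exp (-y ^ 2 / 2)

noncomputable def Phi (x : ℝ) : ℝ := ∫ y in Set.Iic x, phi y

noncomputable def PhiInv (a : ℝ) : ℝ := Function.invFun Phi a

/-!
Everything follows from the two bounds `exp (-2x²/π) ≤ 4 Φ(x) (1 - Φ(x)) ≤ exp (-x²/2)`.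

Each bound says that a function vanishing at `0` and at `∞` is nonnegative in between, which holds
as soon as its derivative changes sign at most once, from `+` to `-`. That property is inherited,
through positive factors and integration from `0`, from an antitone function.

At `x = Φ⁻¹(β)` the upper bound gives `Φ⁻¹(β)² ≤ -2 log (4β(1 - β))`, which is at most
`-2 (1 - 2β) log (β / (1 - β))` because the entropy of a coin is at most `log 2`. At
`x = -Φ⁻¹(α)` the lower bound, combined with `φ(x)³ = φ(0)³ exp (-3x²/2)` and
`2Φ(x) - 1 ≤ 2 φ(0) x`, gives `φ(x)³ (1 - 2α) / (α² (1 - α)²) ≤ x`. The claim is the product of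
these two estimates.
-/

open MeasureTheory ProbabilityTheory

/-- Once `f` is negative at some point of `s`, it is negative at all later points of `s`: along `s`
the sign of `f` changes at most once, from nonnegative to negative. -/
def NegPersistsOn {ι : Type*} [Preorder ι] (f : ι → ℝ) (s : Set ι) : Prop :=
  ∀ ⦃x⦄, x ∈ s → ∀ ⦃y⦄, y ∈ s → x ≤ y → f x < 0 → f y < 0

namespace NegPersistsOn

section Preorder

variable {ι κ : Type*} [Preorder ι] [Preorder κ] {f w : ι → ℝ} {s : Set ι}

theorem of_antitoneOn (hf : AntitoneOn f s) : NegPersistsOn f s :=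
  fun _ hx _ hy hxy h => (hf hx hy hxy).trans_lt h

theorem pos_mul (hf : NegPersistsOn f s) (hw : ∀ x ∈ s, 0 < w x) :
    NegPersistsOn (fun x => w x * f x) s :=
  fun _ hx _ hy hxy h => mul_neg_of_pos_of_neg (hw _ hy)
    (hf hx hy hxy (neg_of_mul_neg_right h (hw _ hx).le))

theorem comp_monotoneOn {g : κ → ι} {t : Set κ} (hf : NegPersistsOn f s) (hg : MonotoneOn g t)
    (hts : MapsTo g t s) : NegPersistsOn (f ∘ g) t :=
  fun _ hx _ hy hxy h => hf (hts hx) (hts hy) (hg hx hy hxy) h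

end Preorder

section Derivative

variable {f f' : ℝ → ℝ} {a x y : ℝ}

theorem le_of_neg (hf' : NegPersistsOn f' (Ici a))
    (hderiv : ∀ z ∈ Ici a, HasDerivAt f (f' z) z) (ha : 0 ≤ f a) (hax : a ≤ x) (hxy : x ≤ y)
    (hx : f x < 0) : f y ≤ f x := by
  have hcont : ContinuousOn f (Ici a) := fun z hz => (hderiv z hz).continuousAt.continuousWithinAt
  have hax' : a < x := hax.lt_of_ne (by rintro rfl; exact hx.not_ge ha)
  obtain ⟨z, hz, hslope⟩ := exists_hasDerivAt_eq_slope f f' hax' (hcont.mono Icc_subset_Ici_self)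
    fun u hu => hderiv u hu.1.le
  have hz' : f' z < 0 := by
    rw [hslope]
    exact div_neg_of_neg_of_pos (by linarith) (by linarith)
  have hanti : AntitoneOn f (Ici z) := by
    have hsub : Ici z ⊆ Ici a := Ici_subset_Ici.2 hz.1.le
    refine antitoneOn_of_hasDerivWithinAt_nonpos (convex_Ici z) (hcont.mono hsub)
      (fun u hu => (hderiv u (hsub (interior_subset hu))).hasDerivWithinAt) fun u hu => ?_
    have hzu : z ≤ u := interior_subset hu
    exact (hf' hz.1.le (hsub hzu) hzu hz').le
  exact hanti hz.2.le (hz.2.le.trans hxy) hxy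

theorem of_hasDerivAt (hf' : NegPersistsOn f' (Ici a))
    (hderiv : ∀ z ∈ Ici a, HasDerivAt f (f' z) z) (ha : 0 ≤ f a) : NegPersistsOn f (Ici a) :=
  fun _ hx _ _ hxy h => (hf'.le_of_neg hderiv ha hx hxy h).trans_lt h

theorem nonneg_of_tendsto {l : ℝ} (hf' : NegPersistsOn f' (Ici a))
    (hderiv : ∀ z ∈ Ici a, HasDerivAt f (f' z) z) (ha : 0 ≤ f a) (hlim : Tendsto f atTop (𝓝 l))
    (hl : 0 ≤ l) (hax : a ≤ x) : 0 ≤ f x := by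
  by_contra! hx
  have hlx : l ≤ f x := le_of_tendsto hlim
    ((eventually_ge_atTop x).mono fun y hxy => hf'.le_of_neg hderiv ha hax hxy hx)
  linarith

end Derivative

end NegPersistsOn

theorem hasDerivAt_exp_mul_sq (c x : ℝ) :
    HasDerivAt (fun y : ℝ => exp (c * y ^ 2)) (2 * c * x * exp (c * x ^ 2)) x := by
  refine ((hasDerivAt_pow 2 x).const_mul c).exp.congr_deriv ?_
  simp only [Nat.cast_ofNat, Nat.add_one_sub_one, pow_one]
  ring

theorem tendsto_exp_mul_sq_atTop {c : ℝ} (hc : c < 0) :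
    Tendsto (fun x : ℝ => exp (c * x ^ 2)) atTop (𝓝 0) :=
  tendsto_exp_atBot.comp ((tendsto_pow_atTop two_ne_zero).const_mul_atTop_of_neg hc)

theorem phi_eq_gaussianPDFReal : phi = gaussianPDFReal 0 1 := by
  ext x
  simp [phi, gaussianPDFReal]

theorem phi_neg (x : ℝ) : phi (-x) = phi x := by simp [phi]

theorem phi_pos (x : ℝ) : 0 < phi x := by unfold phi; positivity

theorem continuous_phi : Continuous phi := by unfold phi; fun_prop

theorem integrable_phi : Integrable phi :=
  phi_eq_gaussianPDFReal ▸ integrable_gaussianPDFReal 0 1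

theorem integral_phi : ∫ x, phi x = 1 :=
  phi_eq_gaussianPDFReal ▸ integral_gaussianPDFReal_eq_one 0 one_ne_zero

theorem phi_eq_phi_zero_mul_exp (x : ℝ) : phi x = phi 0 * exp (-(1 / 2) * x ^ 2) := by
  have h : -x ^ 2 / 2 = -(1 / 2) * x ^ 2 := by ring
  simp [phi, h]

theorem phi_zero_sq : phi 0 ^ 2 = 1 / (2 * π) := by
  simp [phi, Real.sq_sqrt pi_pos.le, mul_pow, mul_comm]

theorem phi_le_phi_zero (x : ℝ) : phi x ≤ phi 0 := by
  rw [phi_eq_phi_zero_mul_exp]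
  exact mul_le_of_le_one_right (phi_pos 0).le (exp_le_one_iff.2 (by nlinarith [sq_nonneg x]))

theorem antitoneOn_phi : AntitoneOn phi (Ici 0) := fun x (hx : 0 ≤ x) y _ hxy => by
  rw [phi_eq_phi_zero_mul_exp x, phi_eq_phi_zero_mul_exp y]
  have := (phi_pos 0).le
  gcongr ?_ * exp ?_
  nlinarith [pow_le_pow_left₀ hx hxy 2]

theorem Phi_neg (x : ℝ) : Phi (-x) = 1 - Phi x := by
  have hreflect : Phi (-x) = ∫ y in Ioi x, phi y := by
    simpa only [Phi, phi_neg, neg_neg] using integral_comp_neg_Iic (-x) phi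
  have hsplit : Phi x + ∫ y in Ioi x, phi y = 1 :=
    (intervalIntegral.integral_Iic_add_Ioi integrable_phi.integrableOn
      integrable_phi.integrableOn).trans integral_phi
  linarith

theorem Phi_zero : Phi 0 = 1 / 2 := by
  have := Phi_neg 0
  rw [neg_zero] at this
  linarith

theorem hasDerivAt_Phi (x : ℝ) : HasDerivAt Phi (phi x) x := by
  have hPhi : Phi = fun y => (∫ u in (0 : ℝ)..y, phi u) + Phi 0 := by
    ext y
    exact sub_eq_iff_eq_add.1 (intervalIntegral.integral_Iic_sub_Iic
      integrable_phi.integrableOn integrable_phi.integrableOn)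
  rw [hPhi]
  exact (continuous_phi.integral_hasStrictDerivAt 0 x).hasDerivAt.add_const _

theorem continuous_Phi : Continuous Phi :=
  continuous_iff_continuousAt.2 fun x => (hasDerivAt_Phi x).continuousAt

theorem strictMono_Phi : StrictMono Phi :=
  strictMono_of_deriv_pos fun x => (hasDerivAt_Phi x).deriv ▸ phi_pos x

theorem tendsto_Phi_atTop : Tendsto Phi atTop (𝓝 1) :=
  integral_phi ▸ (aecover_Iic tendsto_id).integral_tendsto_of_countably_generated integrable_phi

theorem tendsto_Phi_atBot : Tendsto Phi atBot (𝓝 0) := by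
  have h : Tendsto (fun x => 1 - Phi (-x)) atBot (𝓝 (1 - 1)) :=
    (tendsto_Phi_atTop.comp tendsto_neg_atBot_atTop).const_sub 1
  simpa only [Phi_neg, sub_sub_cancel, sub_self] using h

theorem exists_Phi_eq {p : ℝ} (hp₀ : 0 < p) (hp₁ : p < 1) : ∃ x, Phi x = p :=
  mem_range_of_exists_le_of_exists_ge continuous_Phi
    (tendsto_Phi_atBot.eventually_le_const hp₀).exists
    (tendsto_Phi_atTop.eventually_const_le hp₁).exists

theorem Phi_PhiInv {p : ℝ} (hp₀ : 0 < p) (hp₁ : p < 1) : Phi (PhiInv p) = p :=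
  Function.invFun_eq (exists_Phi_eq hp₀ hp₁)

theorem PhiInv_nonpos {p : ℝ} (hp₀ : 0 < p) (hp : p ≤ 1 / 2) : PhiInv p ≤ 0 := by
  rwa [← strictMono_Phi.le_iff_le, Phi_PhiInv hp₀ (by linarith), Phi_zero]

theorem Phi_sub_half_le {x : ℝ} (hx : 0 ≤ x) : Phi x - 1 / 2 ≤ phi 0 * x := by
  have h := image_sub_le_mul_sub_of_deriv_le (fun x => (hasDerivAt_Phi x).differentiableAt)
    (fun x => (hasDerivAt_Phi x).deriv.trans_le (phi_le_phi_zero x)) hx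
  rwa [Phi_zero, sub_zero] at h

theorem hasDerivAt_four_mul_Phi_mul_one_sub (x : ℝ) :
    HasDerivAt (fun y => 4 * (Phi y * (1 - Phi y))) (-(4 * phi x * (2 * Phi x - 1))) x := by
  have h := hasDerivAt_Phi x
  refine ((h.mul (h.const_sub 1)).const_mul 4).congr_deriv ?_
  ring

theorem tendsto_four_mul_Phi_mul_one_sub :
    Tendsto (fun x => 4 * (Phi x * (1 - Phi x))) atTop (𝓝 0) := by
  simpa using (tendsto_Phi_atTop.mul (tendsto_Phi_atTop.const_sub 1)).const_mul 4

theorem negPersistsOn_Phi_sub_linear :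
    NegPersistsOn (fun x => 4 * phi 0 * (2 * Phi x - 1) - x) (Ici 0) := by
  have hderiv : NegPersistsOn (fun x => 4 * phi 0 * (2 * phi x) - 1) (Ici 0) :=
    .of_antitoneOn fun x hx y hy hxy => by
      have := (phi_pos 0).le
      have := antitoneOn_phi hx hy hxy
      gcongr
  refine hderiv.of_hasDerivAt (fun x _ => ?_) (by simp [Phi_zero])
  exact ((((hasDerivAt_Phi x).const_mul 2).sub_const 1).const_mul _).sub (hasDerivAt_id x)

theorem four_mul_Phi_mul_one_sub_le_exp (x : ℝ) :
    4 * (Phi x * (1 - Phi x)) ≤ exp (-(1 / 2) * x ^ 2) := by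
  wlog hx : 0 ≤ x generalizing x
  · simpa only [Phi_neg, sub_sub_cancel, neg_sq, mul_comm (1 - Phi x)] using this (-x) (by linarith)
  have hderiv := negPersistsOn_Phi_sub_linear.pos_mul fun x _ => exp_pos (-(1 / 2) * x ^ 2)
  refine sub_nonneg.1 (hderiv.nonneg_of_tendsto
    (f := fun y => exp (-(1 / 2) * y ^ 2) - 4 * (Phi y * (1 - Phi y))) (fun y _ => ?_)
    (by norm_num [Phi_zero]) ((tendsto_exp_mul_sq_atTop (by norm_num)).sub
      tendsto_four_mul_Phi_mul_one_sub) (sub_self 0).ge hx)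
  refine ((hasDerivAt_exp_mul_sq _ y).sub (hasDerivAt_four_mul_Phi_mul_one_sub y)).congr_deriv ?_
  rw [phi_eq_phi_zero_mul_exp y]
  ring

theorem negPersistsOn_one_sub_linear_sub_exp {b : ℝ} (hb : 0 ≤ b) (a : ℝ) :
    NegPersistsOn (fun u => 1 - a * u - exp (-b * u)) (Ici 0) := by
  have hderiv : NegPersistsOn (fun u => b * exp (-b * u) - a) (Ici 0) :=
    .of_antitoneOn fun u _ v _ huv => by
      have : -b * v ≤ -b * u := mul_le_mul_of_nonpos_left huv (neg_nonpos.2 hb)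
      gcongr
  refine hderiv.of_hasDerivAt (fun u _ => ?_) (by simp)
  refine ((((hasDerivAt_id u).const_mul a).const_sub 1).sub
    ((hasDerivAt_id u).const_mul (-b)).exp).congr_deriv ?_
  simp only [id_eq]
  ring

theorem negPersistsOn_mul_exp_sub_Phi : NegPersistsOn
    (fun x => 4 / π * x * exp ((1 / 2 - 2 / π) * x ^ 2) - 4 * phi 0 * (2 * Phi x - 1)) (Ici 0) := by
  have hπ : 2 / π ≤ 1 := (div_le_one pi_pos).2 two_le_pi
  have hbracket := (negPersistsOn_one_sub_linear_sub_exp (sub_nonneg.2 hπ)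
    (4 / π - 1)).comp_monotoneOn (g := fun x : ℝ => x ^ 2) (t := Ici 0)
    (fun x hx y _ hxy => pow_le_pow_left₀ hx hxy 2) fun x _ => sq_nonneg x
  have hweight : ∀ x ∈ Ici (0 : ℝ), 0 < 4 / π * exp ((1 / 2 - 2 / π) * x ^ 2) :=
    fun x _ => by positivity
  refine (hbracket.pos_mul hweight).of_hasDerivAt (fun x _ => ?_) (by simp [Phi_zero])
  refine ((((hasDerivAt_id x).const_mul (4 / π)).mul (hasDerivAt_exp_mul_sq _ x)).sub
    ((((hasDerivAt_Phi x).const_mul 2).sub_const 1).const_mul (4 * phi 0))).congr_deriv ?_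
  have hexp : exp (-(1 / 2) * x ^ 2) =
      exp ((1 / 2 - 2 / π) * x ^ 2) * exp (-(1 - 2 / π) * x ^ 2) := by
    rw [← exp_add]
    ring_nf
  have hphi : phi 0 * phi x = 1 / (2 * π) * exp (-(1 / 2) * x ^ 2) := by
    rw [phi_eq_phi_zero_mul_exp x, ← mul_assoc, ← sq, phi_zero_sq]
  simp only [Function.comp_apply, id_eq]
  linear_combination -8 * hphi - 4 / π * hexp

/-- The Pólya inequality; with the constant `2 / π` the two sides agree to second order at `0`. -/
theorem exp_le_four_mul_Phi_mul_one_sub (x : ℝ) :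
    exp (-(2 / π) * x ^ 2) ≤ 4 * (Phi x * (1 - Phi x)) := by
  wlog hx : 0 ≤ x generalizing x
  · simpa only [Phi_neg, sub_sub_cancel, neg_sq, mul_comm (1 - Phi x)] using this (-x) (by linarith)
  have hderiv := negPersistsOn_mul_exp_sub_Phi.pos_mul fun x _ => exp_pos (-(1 / 2) * x ^ 2)
  refine sub_nonneg.1 (hderiv.nonneg_of_tendsto
    (f := fun y => 4 * (Phi y * (1 - Phi y)) - exp (-(2 / π) * y ^ 2)) (fun y _ => ?_)
    (by norm_num [Phi_zero]) (tendsto_four_mul_Phi_mul_one_sub.sub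
      (tendsto_exp_mul_sq_atTop (by simp [pi_pos]))) (sub_self 0).ge hx)
  refine ((hasDerivAt_four_mul_Phi_mul_one_sub y).sub (hasDerivAt_exp_mul_sq _ y)).congr_deriv ?_
  have hexp : exp (-(2 / π) * y ^ 2) =
      exp (-(1 / 2) * y ^ 2) * exp ((1 / 2 - 2 / π) * y ^ 2) := by
    rw [← exp_add]
    ring_nf
  rw [phi_eq_phi_zero_mul_exp y, hexp]
  ring

theorem phi_pow_three_le (x : ℝ) : phi x ^ 3 ≤ phi 0 ^ 3 * (4 * (Phi x * (1 - Phi x))) ^ 2 := by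
  have hphi0 := phi_pos 0
  have hexp : exp (-(1 / 2) * x ^ 2) ^ 3 ≤ exp (-(2 / π) * x ^ 2) ^ 2 := by
    rw [← exp_nat_mul, ← exp_nat_mul, exp_le_exp]
    have hπ : 2 / π ≤ 2 / 3 := by gcongr; exact pi_gt_three.le
    push_cast
    nlinarith [mul_le_mul_of_nonneg_right hπ (sq_nonneg x), sq_nonneg x]
  calc phi x ^ 3 = phi 0 ^ 3 * exp (-(1 / 2) * x ^ 2) ^ 3 := by
        rw [phi_eq_phi_zero_mul_exp, mul_pow]
    _ ≤ phi 0 ^ 3 * exp (-(2 / π) * x ^ 2) ^ 2 := by gcongr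
    _ ≤ phi 0 ^ 3 * (4 * (Phi x * (1 - Phi x))) ^ 2 := by
        gcongr
        exact exp_le_four_mul_Phi_mul_one_sub x

theorem phi_pow_three_mul_two_mul_Phi_sub_one_le {x : ℝ} (hx : 0 ≤ x) :
    phi x ^ 3 * (2 * Phi x - 1) ≤ x * (Phi x * (1 - Phi x)) ^ 2 := by
  have hphi0 := phi_pos 0
  have hconst : 32 * phi 0 ^ 4 ≤ 1 := by
    have h : phi 0 ^ 2 ≤ 1 / 6 := by
      rw [phi_zero_sq]
      gcongr
      linarith [pi_gt_three]
    nlinarith [sq_nonneg (phi 0)]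
  have hPhi : 0 ≤ 2 * Phi x - 1 := by
    linarith [strictMono_Phi.monotone hx, Phi_zero]
  calc phi x ^ 3 * (2 * Phi x - 1)
      ≤ phi 0 ^ 3 * (4 * (Phi x * (1 - Phi x))) ^ 2 * (2 * (phi 0 * x)) := by
        gcongr
        · exact phi_pow_three_le x
        · linarith [Phi_sub_half_le hx]
    _ = 32 * phi 0 ^ 4 * (x * (Phi x * (1 - Phi x)) ^ 2) := by ring
    _ ≤ x * (Phi x * (1 - Phi x)) ^ 2 := mul_le_of_le_one_left (by positivity) hconst

theorem phi_PhiInv_pow_three_mul_div_le {p : ℝ} (hp₀ : 0 < p) (hp : p ≤ 1 / 2) :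
    phi (PhiInv p) ^ 3 * (1 - 2 * p) / (p ^ 2 * (1 - p) ^ 2) ≤ -PhiInv p := by
  have h := phi_pow_three_mul_two_mul_Phi_sub_one_le (neg_nonneg.2 (PhiInv_nonpos hp₀ hp))
  rw [phi_neg, Phi_neg, Phi_PhiInv hp₀ (by linarith)] at h
  have hp₁ : 0 < 1 - p := by linarith
  rw [div_le_iff₀ (by positivity)]
  linear_combination h

theorem one_sub_two_mul_mul_log_div_le_log {p : ℝ} (hp₀ : 0 < p) (hp₁ : p < 1) :
    (1 - 2 * p) * log (p / (1 - p)) ≤ log (4 * (p * (1 - p))) := by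
  have hq : 0 < 1 - p := sub_pos.2 hp₁
  have hentropy : -(p * log p) - (1 - p) * log (1 - p) ≤ log 2 := by
    have h := binEntropy_le_log_two (p := p)
    rw [binEntropy_eq_negMulLog_add_negMulLog_one_sub, negMulLog, negMulLog] at h
    linarith
  have hfour : log 4 = 2 * log 2 := by
    rw [show (4 : ℝ) = 2 ^ 2 by norm_num, log_pow, Nat.cast_ofNat]
  rw [log_div hp₀.ne' hq.ne', log_mul four_ne_zero (by positivity), log_mul hp₀.ne' hq.ne', hfour]
  linarith

theorem PhiInv_sq_le {p : ℝ} (hp₀ : 0 < p) (hp₁ : p < 1) :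
    PhiInv p ^ 2 ≤ -(2 * (1 - 2 * p) * log (p / (1 - p))) := by
  have hpos : 0 < 4 * (p * (1 - p)) := mul_pos four_pos (mul_pos hp₀ (sub_pos.2 hp₁))
  have h := four_mul_Phi_mul_one_sub_le_exp (PhiInv p)
  rw [Phi_PhiInv hp₀ hp₁, ← log_le_iff_le_exp hpos] at h
  linarith [one_sub_two_mul_mul_log_div_le_log hp₀ hp₁]

theorem two_dim_inequality_general (α β : ℝ) (hα₀ : 0 < α) (hα : α ≤ 1 / 2) (hβ₀ : 0 < β)
    (hβ₁ : β < 1) :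
    (PhiInv β) ^ 2 * (phi (PhiInv α)) ^ 3 * (2 * α - 1) / (α ^ 2 * (1 - α) ^ 2)
      + 2 * (1 - 2 * β) * Real.log (β / (1 - β)) * PhiInv α ≥ 0 := by
  have hPhiInv : 0 ≤ -PhiInv α := neg_nonneg.2 (PhiInv_nonpos hα₀ hα)
  have hmain : PhiInv β ^ 2 * (phi (PhiInv α) ^ 3 * (1 - 2 * α) / (α ^ 2 * (1 - α) ^ 2)) ≤
      -(2 * (1 - 2 * β) * log (β / (1 - β))) * -PhiInv α :=
    calc _ ≤ PhiInv β ^ 2 * -PhiInv α := by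
          gcongr
          exact phi_PhiInv_pow_three_mul_div_le hα₀ hα
      _ ≤ _ := by
          gcongr
          exact PhiInv_sq_le hβ₀ hβ₁
  linear_combination hmain

theorem two_dim_inequality (α β : ℝ) (hβ : 0 < β) (hβα : β ≤ α) (hα : α < 1 / 2) :
    (PhiInv β) ^ 2 * (phi (PhiInv α)) ^ 3 * (2 * α - 1) / (α ^ 2 * (1 - α) ^ 2)
      + 2 * (1 - 2 * β) * Real.log (β / (1 - β)) * PhiInv α ≥ 0 :=
  two_dim_inequality_general α β (hβ.trans_le hβα) hα.le hβ (by linarith)
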